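/- Let W = F_{q^n} × F_{q^n} and let U be a nonzero F_q-subspace of W with dim_{F_q} U = n, and set d = min{ w_{L_U}(P) : P ∈ L_U }. Then d divides n, there exists an F_{q^d}-subspace U' of W with L_{U'} = L_U (so L_U is an F_{q^d}-linear set), and for every e > d there is no F_{q^e}-subspace U'' of W with L_{U''} = L_U; that is, the maximum field of linearity of L_U is F_{q^d}. -/

import Mathlib

/-- The `F_q`-linear set of PG(1,q^n) defined by a set `S ⊆ F × F`: the set of
one-dimensional `F`-subspaces spanned by the nonzero vectors of `S`. -/
def linSet (F : Type) [Field F] (S : Set (F × F)) : Set (Submodule F (F × F)) :=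
  {X | ∃ u ∈ S, u ≠ 0 ∧ X = Submodule.span F {u}}

/-!
Put `W = F × F`. Some point of `PG(W)` is not in `L_U`, so after a change of coordinates `U` is the
graph of an `F_q`-linear map `f x = ∑ i, c i * x ^ q ^ i`, with `i` ranging over `ℤ/n`, and the
points of `L_U` are the directions determined by `f`. The Rédei polynomial
`∏ x, (T - (f x - x * X))` is a `q`-polynomial in `T`. Reducing it modulo `T ^ q ^ n - T` gives
coefficients `B i ∈ F[X]`, `i ∈ ℤ/n`, such that

* `B i` vanishes off the directions, and vanishes identically for `0 < i < d` by degree reasons;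
* `X ^ q ^ j * B j = ∑ i, c (j - i) ^ q ^ i * B i + δ_{j0} * (X - X ^ q ^ n)`, because `f x - x * X`
  is a root.

Sums of distinct powers of `q` determine their exponents, so comparing degrees in the recursion
shows that the nonzero `B i` have distinct degrees. Hence no cancellation of leading terms occurs on
the right-hand side, and `B j ≠ 0` whenever `B i ≠ 0` and `c (j - i) ≠ 0`. As `B 0 ≠ 0`, all `B i`
with `i` in the subgroup generated by the support of `c` are nonzero. This subgroup is `gℤ/n` for
some `g ∣ n`, and `g ≥ d` by the vanishing of the `B i` with `0 < i < d`; but `f` is then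
`F_{q^g}`-linear, which makes all weights at least `g`. So `g = d`.

The same coefficients show that `L_U` has at least `q ^ (n - d)` points, whereas an
`F_{q^e}`-subspace missing a point of `PG(W)` has at most `q ^ n - 1` nonzero vectors, at least
`q ^ e - 1` of them on each point of its linear set. This rules out `e > d`.
-/

section Triangular

open Polynomial

variable {ι R : Type*}

theorem eq_of_forall_mem_lt_of_add_sum_eq {b w : ι → ℕ}
    (hw : Function.Injective fun P : Finset ι => ∑ v ∈ P, w v) {i j : ι} {P Q : Finset ι}
    (hP : ∀ v ∈ P, v ≠ i → b i < b v) (hj : j ∈ Q)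
    (hsum : b i + ∑ v ∈ P, w v = b j + ∑ v ∈ Q, w v) (hb : b i = b j) : i = j := by
  obtain rfl : P = Q := hw (by simpa [hb] using hsum)
  by_contra hij
  exact (hP j hj (Ne.symm hij)).ne hb

theorem pos_of_injective_sum {w : ι → ℕ}
    (hw : Function.Injective fun P : Finset ι => ∑ v ∈ P, w v) (i : ι) : 0 < w i := by
  refine Nat.pos_of_ne_zero fun hi => Finset.singleton_ne_empty i (hw ?_)
  simp [hi]

variable [Fintype ι] [CommRing R]

theorem exists_lt_natDegree_of_lt_natDegree_sum {a : ι → R} {B : ι → R[X]} {m : ℕ}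
    (h : m < (∑ i, C (a i) * B i).natDegree) : ∃ i, a i ≠ 0 ∧ m < (B i).natDegree := by
  by_contra! hle
  refine h.not_ge (natDegree_sum_le_of_forall_le _ _ fun i _ => ?_)
  rcases eq_or_ne (a i) 0 with ha | ha
  · simp [ha]
  · exact (natDegree_C_mul_le _ _).trans (hle i ha)

theorem exists_degree_sum_C_mul_eq [IsDomain R] {a : ι → R} {B : ι → R[X]} {i₀ : ι}
    (ha : a i₀ ≠ 0) (hB : B i₀ ≠ 0)
    (hinj : Set.InjOn (fun i => (B i).natDegree)
      {i | B i ≠ 0 ∧ (B i₀).natDegree ≤ (B i).natDegree}) :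
    ∃ i, B i ≠ 0 ∧ (B i₀).natDegree ≤ (B i).natDegree ∧
      (∑ i, C (a i) * B i).degree = (B i).degree := by
  classical
  obtain ⟨m, ⟨ham, hBm⟩, hmax⟩ := Set.exists_max_image {i | a i ≠ 0 ∧ B i ≠ 0}
    (fun i => (B i).natDegree) (Set.toFinite _) ⟨i₀, ha, hB⟩
  refine ⟨m, hBm, hmax i₀ ⟨ha, hB⟩, ?_⟩
  rw [← Finset.add_sum_erase _ _ (Finset.mem_univ m), degree_add_eq_left_of_degree_lt,
    degree_C_mul ham]
  rw [degree_C_mul ham]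
  refine (degree_sum_le _ _).trans_lt ((Finset.sup_lt_iff (by simpa [bot_lt_iff_ne_bot])).mpr ?_)
  intro i hi
  rcases eq_or_ne (C (a i) * B i) 0 with h0 | h0
  · simpa [h0, bot_lt_iff_ne_bot]
  have hai : a i ≠ 0 := fun h => h0 (by simp [h])
  have hBi : B i ≠ 0 := right_ne_zero_of_mul h0
  rw [degree_C_mul hai]
  refine degree_lt_degree ((hmax i ⟨hai, hBi⟩).lt_of_ne fun hdeg => ?_)
  exact Finset.ne_of_mem_erase hi (hinj ⟨hBi, hdeg ▸ hmax i₀ ⟨ha, hB⟩⟩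
    ⟨hBm, hmax i₀ ⟨ha, hB⟩⟩ hdeg)

variable [IsDomain R] [DecidableEq ι] {w : ι → ℕ} {N : ι → ι → R} {B : ι → R[X]} {g : R[X]} {o : ι}

theorem degree_lt_of_mul_X_pow_eq (hw : ∀ i, 0 < w i) (hg : g ≠ 0)
    (h : ∀ j, B j * X ^ w j = ∑ i, C (N i j) * B i + Pi.single (M := fun _ => R[X]) o g j) (j : ι) :
    (B j).degree < g.degree := by
  have : Nonempty ι := ⟨j⟩
  obtain ⟨m, hm⟩ := Finite.exists_max fun i => (B i).degree
  refine (hm j).trans_lt (lt_of_not_ge fun hgm => ?_)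
  have hm0 : B m ≠ 0 := fun h0 => hg (by simpa [h0] using hgm)
  have hsum : (∑ i, C (N i m) * B i).degree ≤ (B m).degree := by
    refine (degree_sum_le _ _).trans (Finset.sup_le fun i _ => ?_)
    rw [← smul_eq_C_mul]
    exact (degree_smul_le _ _).trans (hm i)
  have hsingle : (Pi.single (M := fun _ => R[X]) o g m).degree ≤ (B m).degree := by
    rcases eq_or_ne m o with rfl | hmo
    · simpa using hgm
    · simp [hmo]
  have hle := (degree_add_le _ _).trans (max_le hsum hsingle)
  rw [← h m] at hle
  have := natDegree_le_natDegree hle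
  rw [natDegree_mul_X_pow _ hm0] at this
  have := hw m
  omega

theorem natDegree_add_eq_of_mul_X_pow_eq (hw : ∀ i, 0 < w i) (hg : g ≠ 0)
    (h : ∀ j, B j * X ^ w j = ∑ i, C (N i j) * B i + Pi.single (M := fun _ => R[X]) o g j) :
    B o ≠ 0 ∧ (B o).natDegree + w o = g.natDegree := by
  have hsum : (∑ i, C (N i o) * B i).degree < g.degree := by
    refine (degree_sum_le _ _).trans_lt ((Finset.sup_lt_iff (by simpa [bot_lt_iff_ne_bot])).mpr ?_)
    intro i _
    rw [← smul_eq_C_mul]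
    exact (degree_smul_le _ _).trans_lt (degree_lt_of_mul_X_pow_eq hw hg h i)
  have hdeg : (B o * X ^ w o).degree = g.degree := by
    rw [h o, Pi.single_eq_same, degree_add_eq_right_of_degree_lt hsum]
  have ho : B o ≠ 0 := fun h0 => hg (degree_eq_bot.mp (by simpa [h0] using hdeg.symm))
  exact ⟨ho, by rw [← natDegree_mul_X_pow _ ho, natDegree_eq_of_degree_eq hdeg]⟩

/-- By the recursion, for `j ≠ o` the number `deg (B j) + w j` is the degree of some `B i`;
iterating until `o` is reached produces `P`. By downward induction on the degree, the `B i`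
occurring here have distinct degrees, so that their leading terms do not cancel: equal degrees would
give two sets of indices with the same sum of weights. -/
theorem exists_natDegree_add_sum_eq (hw : Function.Injective fun P : Finset ι => ∑ v ∈ P, w v)
    (hg : g ≠ 0)
    (h : ∀ j, B j * X ^ w j = ∑ i, C (N i j) * B i + Pi.single (M := fun _ => R[X]) o g j)
    {j : ι} (hj : B j ≠ 0) :
    ∃ P : Finset ι, j ∈ P ∧ (B j).natDegree + ∑ v ∈ P, w v = g.natDegree ∧
      ∀ v ∈ P, v ≠ j → (B j).natDegree < (B v).natDegree := by
  have hw0 : ∀ i, 0 < w i := pos_of_injective_sum hw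
  induction hr : g.natDegree - (B j).natDegree using Nat.strong_induction_on generalizing j with
  | _ r ih =>
  rcases eq_or_ne j o with rfl | hjo
  · exact ⟨{j}, by simp, by simpa using (natDegree_add_eq_of_mul_X_pow_eq hw0 hg h).2, by simp⟩
  have hsum : ∑ i, C (N i j) * B i = B j * X ^ w j := by simp [h j, hjo]
  have hbj : (B j * X ^ w j).natDegree = (B j).natDegree + w j := natDegree_mul_X_pow _ hj
  have hcert {i} (hi : B i ≠ 0) (hji : (B j).natDegree < (B i).natDegree) := by
    have := natDegree_le_natDegree (degree_lt_of_mul_X_pow_eq hw0 hg h i).le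
    exact ih _ (by omega) hi rfl
  obtain ⟨i₀, hNi₀, hi₀⟩ : ∃ i, N i j ≠ 0 ∧ (B j).natDegree < (B i).natDegree :=
    exists_lt_natDegree_of_lt_natDegree_sum <| by
      rw [hsum, hbj]
      exact Nat.lt_add_of_pos_right (hw0 j)
  have hinj : Set.InjOn (fun i => (B i).natDegree)
      {i | B i ≠ 0 ∧ (B i₀).natDegree ≤ (B i).natDegree} := by
    rintro i ⟨hi, hle⟩ i' ⟨hi', hle'⟩ hb
    obtain ⟨P, -, hP, hPlt⟩ := hcert hi (by omega)
    obtain ⟨Q, hQmem, hQ, -⟩ := hcert hi' (by omega)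
    exact eq_of_forall_mem_lt_of_add_sum_eq (b := fun i => (B i).natDegree) hw hPlt hQmem
      (hP.trans hQ.symm) hb
  obtain ⟨i, hBi, hle, hdeg⟩ := exists_degree_sum_C_mul_eq (a := fun i => N i j) hNi₀
    (ne_zero_of_natDegree_gt hi₀) hinj
  obtain ⟨P, -, hP, hPlt⟩ := hcert hBi (by omega)
  have hPj v (hv : v ∈ P) : (B j).natDegree < (B v).natDegree := by
    rcases eq_or_ne v i with rfl | hvi
    · omega
    · have := hPlt v hv hvi
      omega
  refine ⟨insert j P, Finset.mem_insert_self _ _, ?_, fun v hv hvj =>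
    hPj v (Finset.mem_of_mem_insert_of_ne hv hvj)⟩
  rw [Finset.sum_insert fun hjP => (hPj j hjP).false, ← add_assoc, ← hbj, ← hsum,
    natDegree_eq_of_degree_eq hdeg, hP]

theorem injOn_natDegree_of_mul_X_pow_eq
    (hw : Function.Injective fun P : Finset ι => ∑ v ∈ P, w v) (hg : g ≠ 0)
    (h : ∀ j, B j * X ^ w j = ∑ i, C (N i j) * B i + Pi.single (M := fun _ => R[X]) o g j) :
    Set.InjOn (fun i => (B i).natDegree) {i | B i ≠ 0} := by
  intro i hi j hj hij
  obtain ⟨P, -, hP, hPlt⟩ := exists_natDegree_add_sum_eq hw hg h hi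
  obtain ⟨Q, hjQ, hQ, -⟩ := exists_natDegree_add_sum_eq hw hg h hj
  exact eq_of_forall_mem_lt_of_add_sum_eq (b := fun i => (B i).natDegree) hw hPlt hjQ
    (hP.trans hQ.symm) hij

theorem ne_zero_of_mul_X_pow_eq (hw : Function.Injective fun P : Finset ι => ∑ v ∈ P, w v)
    (hg : g ≠ 0)
    (h : ∀ j, B j * X ^ w j = ∑ i, C (N i j) * B i + Pi.single (M := fun _ => R[X]) o g j)
    {i j : ι} (hi : B i ≠ 0) (hN : N i j ≠ 0) : B j ≠ 0 := by
  rcases eq_or_ne j o with rfl | hjo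
  · exact (natDegree_add_eq_of_mul_X_pow_eq (pos_of_injective_sum hw) hg h).1
  obtain ⟨i', hi', -, hdeg⟩ := exists_degree_sum_C_mul_eq (a := fun i => N i j) hN hi
    ((injOn_natDegree_of_mul_X_pow_eq hw hg h).mono fun _ => And.left)
  have hsum : ∑ i, C (N i j) * B i = B j * X ^ w j := by simp [h j, hjo]
  rw [hsum] at hdeg
  intro hj
  exact hi' (degree_eq_bot.mp (by simpa [hj] using hdeg.symm))

end Triangular

section LinearizedPolynomial

open Polynomial

theorem coeff_sum_C_mul_X_pow {ι R : Type*} [Fintype ι] [Semiring R] {e : ι → ℕ}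
    (he : Function.Injective e) (a : ι → R) (i : ι) :
    (∑ i, C (a i) * X ^ e i).coeff (e i) = a i := by
  classical
  simp [coeff_X_pow, he.eq_iff]

theorem natDegree_coeff_prod_X_sub_C_le {ι R : Type*} [CommRing R] [Nontrivial R] (s : Finset ι)
    (l : ι → R[X]) (hl : ∀ i, (l i).natDegree ≤ 1) (j : ℕ) :
    ((∏ i ∈ s, (X - C (l i))).coeff j).natDegree ≤ s.card - j := by
  rcases le_or_gt j s.card with hj | hj
  · simp only [sub_eq_add_neg, ← C_neg]
    rw [Finset.prod_X_add_C_coeff s _ hj]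
    refine natDegree_sum_le_of_forall_le _ _ fun t ht => (natDegree_prod_le _ _).trans ?_
    rw [← (Finset.mem_powersetCard.mp ht).2, Finset.card_eq_sum_ones]
    exact Finset.sum_le_sum fun i _ => (natDegree_neg _).trans_le (hl i)
  · rw [coeff_eq_zero_of_natDegree_lt (by rwa [natDegree_finsetProd_X_sub_C_eq_card])]
    simp

theorem frobeniusAlgHom_pow_apply (k R : Type*) [Field k] [Fintype k] [CommRing R] [Algebra k R]
    (i : ℕ) (z : R) : (FiniteField.frobeniusAlgHom k R ^ i) z = z ^ Fintype.card k ^ i := by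
  simp [FiniteField.coe_frobeniusAlgHom, AlgHom.coe_pow, pow_iterate]

variable {k V A : Type*} [Field k] [Fintype k] [AddCommGroup V] [Module k V]
  [CommRing A] [IsDomain A] [Algebra k A]

theorem exists_sum_mul_pow_eq_zero [Module.Finite k V] (h : V →ₗ[k] A) :
    ∃ a : Fin (Module.finrank k V + 1) → A, a ≠ 0 ∧
      ∀ x, ∑ i, a i * h x ^ Fintype.card k ^ (i : ℕ) = 0 := by
  let v (i : Fin (Module.finrank k V + 1)) : V →ₗ[k] A :=
    (FiniteField.frobeniusAlgHom k A ^ (i : ℕ)).toLinearMap ∘ₗ h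
  have hv : ¬ LinearIndependent A v := fun hli => by
    have := hli.fintype_card_le_finrank
    rw [Fintype.card_fin, Module.finrank_linearMap_self] at this
    omega
  obtain ⟨a, ha, i, hai⟩ := Fintype.not_linearIndependent_iff.mp hv
  refine ⟨a, fun h0 => hai (congrFun h0 i), fun x => ?_⟩
  simpa [v, FiniteField.coe_frobeniusAlgHom, pow_iterate] using LinearMap.congr_fun ha x

theorem exists_eq_pow_of_coeff_prod_X_sub_C_ne_zero [Fintype V] {h : V →ₗ[k] A}
    (hh : Function.Injective h) {j : ℕ} (hj : (∏ x, (X - C (h x))).coeff j ≠ 0) :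
    ∃ i ≤ Module.finrank k V, j = Fintype.card k ^ i := by
  obtain ⟨a, ha0, ha⟩ := exists_sum_mul_pow_eq_zero h
  let L : A[X] := ∑ i, C (a i) * X ^ Fintype.card k ^ (i : ℕ)
  have hL0 : L ≠ 0 := fun h0 => ha0 <| funext fun i => by
    rw [← coeff_sum_C_mul_X_pow ((Nat.pow_right_injective (Fintype.one_lt_card (α := k))).comp
      Fin.val_injective) a i]
    exact congrArg (fun P : A[X] => P.coeff _) h0
  have hdeg : L.natDegree ≤ (∏ x, (X - C (h x))).natDegree := by
    rw [natDegree_finsetProd_X_sub_C_eq_card, Finset.card_univ,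
      Module.card_eq_pow_finrank (K := k)]
    refine natDegree_sum_le_of_forall_le _ _ fun i _ => (natDegree_C_mul_X_pow_le _ _).trans ?_
    exact Nat.pow_le_pow_right Fintype.card_pos (Nat.lt_succ_iff.mp i.isLt)
  have hdvd : (∏ x, (X - C (h x))) ∣ L := by
    have hroots : (Finset.univ.val.map h) ≤ L.roots := by
      refine (Multiset.le_iff_subset (Finset.univ.nodup.map hh)).mpr fun z hz => ?_
      obtain ⟨x, -, rfl⟩ := Multiset.mem_map.mp hz
      exact (mem_roots hL0).mpr (by simpa [L, IsRoot.def, eval_finsetSum] using ha x)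
    simpa only [Finset.prod, Multiset.map_map, Function.comp_def] using
      (Multiset.prod_X_sub_C_dvd_iff_le_roots hL0 _).mpr hroots
  have hL := eq_leadingCoeff_mul_of_monic_of_dvd_of_natDegree_le (monic_prod_X_sub_C _ _) hdvd hdeg
  have hLj : L.coeff j ≠ 0 := by
    rw [hL, coeff_C_mul]
    exact mul_ne_zero (leadingCoeff_ne_zero.mpr hL0) hj
  by_contra! hne
  refine hLj ?_
  simp only [L, finsetSum_coeff, coeff_C_mul, coeff_X_pow]
  exact Finset.sum_eq_zero fun i _ => by
    rw [if_neg (hne i (Nat.lt_succ_iff.mp i.isLt)), mul_zero]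

end LinearizedPolynomial

section Redei

open Polynomial

variable {k K : Type*} [Field k] [Field K] [Algebra k K]

instance neZero_finrank [Module.Finite k K] : NeZero (Module.finrank k K) :=
  ⟨Module.finrank_pos.ne'⟩

theorem card_pow_zmod_val_injective [Fintype k] [Module.Finite k K] :
    Function.Injective fun i : ZMod (Module.finrank k K) => Fintype.card k ^ i.val :=
  (Nat.pow_right_injective Fintype.one_lt_card).comp (ZMod.val_injective _)

theorem card_pow_zmod_val_lt_card [Fintype k] [Fintype K] (i : ZMod (Module.finrank k K)) :
    Fintype.card k ^ i.val < Fintype.card K := by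
  rw [Module.card_eq_pow_finrank (K := k) (V := K)]
  exact Nat.pow_lt_pow_right Fintype.one_lt_card i.val_lt

/-- The map `x ↦ f x - x * y`, whose kernel consists of the `x` for which the point `(x, f x)` of
the graph of `f` lies on the line of slope `y` through the origin. -/
def slopeMap (f : K →ₗ[k] K) (y : K) : K →ₗ[k] K :=
  f - LinearMap.mulRight k y

@[simp]
theorem slopeMap_apply (f : K →ₗ[k] K) (x y : K) : slopeMap f y x = f x - x * y :=
  rfl

/-- The directions determined by the graph of `f`: the slopes of the lines through the origin that
contain a nonzero point of the graph. -/
def directions (f : K →ₗ[k] K) : Set K :=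
  {y | (slopeMap f y).ker ≠ ⊥}

theorem mem_directions_iff {f : K →ₗ[k] K} {y : K} :
    y ∈ directions f ↔ ∃ x ≠ 0, f x / x = y := by
  rw [directions, Set.mem_ofPred_eq, Submodule.ne_bot_iff]
  refine exists_congr fun x => ?_
  rw [LinearMap.mem_ker, slopeMap_apply, sub_eq_zero, and_comm]
  exact and_congr_right fun hx => by rw [div_eq_iff hx, mul_comm]

variable [Fintype K]

/-- The Rédei polynomial `∏ x, (T - (f x - x * X))` of the graph of `f`, as a polynomial in `T`
with coefficients in `K[X]`. -/
noncomputable def redei (f : K →ₗ[k] K) : K[X][X] :=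
  ∏ x, (X - C (C (f x) - C x * X))

theorem coeff_redei_card (f : K →ₗ[k] K) : (redei f).coeff (Fintype.card K) = 1 := by
  have hmonic : (redei f).Monic := monic_prod_X_sub_C _ _
  have hdeg : (redei f).natDegree = Fintype.card K := natDegree_finsetProd_X_sub_C_eq_card _ _
  rw [← hdeg, hmonic.coeff_natDegree]

theorem natDegree_coeff_redei_le (f : K →ₗ[k] K) (j : ℕ) :
    ((redei f).coeff j).natDegree ≤ Fintype.card K - j :=
  natDegree_coeff_prod_X_sub_C_le _ _ (fun x => by compute_degree) j

theorem eval_redei (f : K →ₗ[k] K) (x : K) : (redei f).eval (C (f x) - C x * X) = 0 := by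
  rw [redei, eval_prod]
  exact Finset.prod_eq_zero (Finset.mem_univ x) (by simp)

theorem map_evalRingHom_redei (f : K →ₗ[k] K) (y : K) :
    (redei f).map (evalRingHom y) = ∏ x, (X - C (slopeMap f y x)) := by
  simp [redei, Polynomial.map_prod]

theorem map_evalRingHom_redei_of_notMem_directions {f : K →ₗ[k] K} {y : K}
    (hy : y ∉ directions f) :
    (redei f).map (evalRingHom y) = X ^ Fintype.card K - X := by
  have hbij : Function.Bijective (slopeMap f y) :=
    Finite.injective_iff_bijective.mp (LinearMap.ker_eq_bot.mp (not_not.mp hy))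
  rw [map_evalRingHom_redei, hbij.prod_comp fun x => X - C x]
  have hmonic : (X ^ Fintype.card K - X : K[X]).Monic :=
    monic_X_pow_sub (by simpa using Fintype.one_lt_card)
  have h := prod_multiset_X_sub_C_of_monic_of_roots_card_eq hmonic (by
    rw [FiniteField.roots_X_pow_card_sub_X,
      FiniteField.X_pow_card_sub_X_natDegree_eq K Fintype.one_lt_card]
    rfl)
  rwa [FiniteField.roots_X_pow_card_sub_X] at h

theorem eval_coeff_redei_of_lt_card_ker (f : K →ₗ[k] K) {y : K} {j : ℕ}
    (hj : j < Nat.card (slopeMap f y).ker) : ((redei f).coeff j).eval y = 0 := by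
  classical
  have hdvd : (X : K[X]) ^ Nat.card (slopeMap f y).ker ∣ ∏ x, (X - C (slopeMap f y x)) := by
    rw [← Finset.prod_mul_prod_compl {x | slopeMap f y x = 0},
      Finset.prod_congr rfl (g := fun _ => X) fun x hx => by simp [(Finset.mem_filter.mp hx).2],
      Finset.prod_const, Nat.card_eq_fintype_card, Fintype.card_subtype]
    exact dvd_mul_right _ _
  rw [← coe_evalRingHom, ← coeff_map, map_evalRingHom_redei]
  exact X_pow_dvd_iff.mp hdvd j hj

variable [Fintype k]

theorem exists_eq_pow_of_coeff_redei_ne_zero (f : K →ₗ[k] K) {j : ℕ}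
    (hj : (redei f).coeff j ≠ 0) : ∃ i ≤ Module.finrank k K, j = Fintype.card k ^ i := by
  let ι : K →ₗ[k] K[X] := (Algebra.ofId K K[X]).toLinearMap.restrictScalars k
  let h : K →ₗ[k] K[X] := ι ∘ₗ f - LinearMap.mulRight k X ∘ₗ ι
  have hh (x : K) : h x = C (f x) - C x * X := rfl
  have hinj : Function.Injective h := fun x y hxy => by
    simpa [hh, coeff_C] using congrArg (fun P : K[X] => P.coeff 1) hxy
  exact exists_eq_pow_of_coeff_prod_X_sub_C_ne_zero hinj hj

/-- The coefficients at `T ^ q ^ i`, for `i` modulo the degree `n` of `K` over `k`, of the Rédei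
polynomial of `f` reduced modulo `T ^ q ^ n - T`, where `q` is the cardinality of `k`. -/
noncomputable def redeiCoeff (f : K →ₗ[k] K) (i : ZMod (Module.finrank k K)) : K[X] :=
  (redei f - (X ^ Fintype.card K - X)).coeff (Fintype.card k ^ i.val)

theorem coeff_X_pow_card_sub_X (R : Type*) [Ring R] (i : ZMod (Module.finrank k K)) :
    (X ^ Fintype.card K - X : R[X]).coeff (Fintype.card k ^ i.val) = if i = 0 then -1 else 0 := by
  have hi0 : 1 = Fintype.card k ^ i.val ↔ i = 0 := by
    rw [← card_pow_zmod_val_injective.eq_iff (a := i), ZMod.val_zero, pow_zero, eq_comm]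
  rw [coeff_sub, coeff_X_pow, coeff_X, if_neg (card_pow_zmod_val_lt_card i).ne]
  simp only [hi0]
  split_ifs <;> simp

theorem redei_sub_eq_sum (f : K →ₗ[k] K) :
    redei f - (X ^ Fintype.card K - X) = ∑ i, C (redeiCoeff f i) * X ^ Fintype.card k ^ i.val := by
  ext1 j
  by_cases hj : ∃ i : ZMod (Module.finrank k K), Fintype.card k ^ i.val = j
  · obtain ⟨i, rfl⟩ := hj
    rw [coeff_sum_C_mul_X_pow card_pow_zmod_val_injective, redeiCoeff]
  push Not at hj
  have hsum : (∑ i, C (redeiCoeff f i) * X ^ Fintype.card k ^ i.val).coeff j = 0 := by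
    simp only [finsetSum_coeff, coeff_C_mul, coeff_X_pow]
    exact Finset.sum_eq_zero fun i _ => by rw [if_neg (hj i).symm, mul_zero]
  have hj1 : j ≠ 1 := fun h => hj 0 (by simp [h])
  rw [hsum, coeff_sub, coeff_sub, coeff_X_of_ne_one hj1, sub_zero, coeff_X_pow]
  rcases eq_or_ne j (Fintype.card K) with rfl | hjK
  · rw [coeff_redei_card, if_pos rfl, sub_self]
  rw [if_neg hjK, sub_zero]
  by_contra hne
  obtain ⟨i, hi, rfl⟩ := exists_eq_pow_of_coeff_redei_ne_zero f hne
  rcases hi.eq_or_lt with rfl | hlt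
  · exact hjK Module.card_eq_pow_finrank.symm
  · exact hj i (by rw [ZMod.val_cast_of_lt hlt])

theorem natDegree_redeiCoeff_le (f : K →ₗ[k] K) (i : ZMod (Module.finrank k K)) :
    (redeiCoeff f i).natDegree ≤ Fintype.card K - Fintype.card k ^ i.val := by
  rw [redeiCoeff, coeff_sub, coeff_X_pow_card_sub_X]
  refine (natDegree_sub_le _ _).trans (max_le (natDegree_coeff_redei_le f _) ?_)
  split_ifs <;> simp

theorem eval_redeiCoeff_of_notMem_directions {f : K →ₗ[k] K} {y : K} (hy : y ∉ directions f)
    (i : ZMod (Module.finrank k K)) : (redeiCoeff f i).eval y = 0 := by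
  rw [redeiCoeff, ← coe_evalRingHom, ← coeff_map, Polynomial.map_sub,
    map_evalRingHom_redei_of_notMem_directions hy]
  simp

theorem eval_redeiCoeff_of_lt_finrank_ker (f : K →ₗ[k] K) {y : K} {i : ZMod (Module.finrank k K)}
    (hi : i.val < Module.finrank k (slopeMap f y).ker) :
    (redeiCoeff f i).eval y = if i = 0 then 1 else 0 := by
  have hlt : Fintype.card k ^ i.val < Nat.card (slopeMap f y).ker := by
    rw [Module.natCard_eq_pow_finrank (K := k), Nat.card_eq_fintype_card]
    exact Nat.pow_lt_pow_right Fintype.one_lt_card hi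
  rw [redeiCoeff, coeff_sub, eval_sub, eval_coeff_redei_of_lt_card_ker f hlt,
    coeff_X_pow_card_sub_X]
  split_ifs <;> simp

theorem redeiCoeff_eq_zero (f : K →ₗ[k] K) {d : ℕ}
    (hd : ∀ y ∈ directions f, d ≤ Module.finrank k (slopeMap f y).ker)
    {i : ZMod (Module.finrank k K)} (hi : i ≠ 0) (hid : i.val < d) : redeiCoeff f i = 0 := by
  refine eq_zero_of_natDegree_lt_card_of_eval_eq_zero' _ Finset.univ (fun y _ => ?_) ?_
  · by_cases hy : y ∈ directions f
    · rw [eval_redeiCoeff_of_lt_finrank_ker f (hid.trans_le (hd y hy)), if_neg hi]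
    · exact eval_redeiCoeff_of_notMem_directions hy i
  · exact (natDegree_redeiCoeff_le f i).trans_lt
      (Nat.sub_lt Fintype.card_pos (Nat.pow_pos Fintype.card_pos))

theorem card_pow_zmod_val_le_ncard_directions {f : K →ₗ[k] K} {i : ZMod (Module.finrank k K)}
    (hi : redeiCoeff f i ≠ 0) : Fintype.card k ^ i.val ≤ (directions f).ncard := by
  classical
  by_contra! hlt
  refine hi (eq_zero_of_natDegree_lt_card_of_eval_eq_zero' _ (directions f)ᶜ.toFinset
    (fun y hy => eval_redeiCoeff_of_notMem_directions (by simpa using hy) i) ?_)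
  refine (natDegree_redeiCoeff_le f i).trans_lt ?_
  rw [← Set.ncard_eq_toFinset_card', Set.ncard_compl, Nat.card_eq_fintype_card]
  exact Nat.sub_lt_sub_left (hlt.trans (card_pow_zmod_val_lt_card i)) hlt

end Redei

section Recursion

open Polynomial

variable {k K : Type*} [Field k] [Fintype k] [Field K] [Algebra k K]

section Finite

variable [Finite K]

theorem linearIndependent_frobeniusAlgHom_pow_zmod_val :
    LinearIndependent K fun i : ZMod (Module.finrank k K) =>
      (FiniteField.frobeniusAlgHom k K ^ i.val).toLinearMap :=
  (linearIndependent_toLinearMap k K K).comp _ fun i j hij =>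
    ZMod.val_injective _ <| Fin.val_eq_of_eq <|
      (FiniteField.bijective_frobeniusAlgHom_pow k K).1 (a₁ := ⟨i.val, i.val_lt⟩)
        (a₂ := ⟨j.val, j.val_lt⟩) hij

theorem exists_eq_sum_mul_pow (f : K →ₗ[k] K) :
    ∃ c : ZMod (Module.finrank k K) → K, ∀ x, f x = ∑ i, c i * x ^ Fintype.card k ^ i.val := by
  let b := basisOfLinearIndependentOfCardEqFinrank
    (linearIndependent_frobeniusAlgHom_pow_zmod_val (k := k) (K := K))
    (by rw [Module.finrank_linearMap_self, ZMod.card])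
  refine ⟨b.repr f, fun x => ?_⟩
  conv_lhs => rw [← b.sum_repr f]
  simp [b, FiniteField.coe_frobeniusAlgHom, pow_iterate]

theorem eq_of_sum_mul_C_pow_eq {a b : ZMod (Module.finrank k K) → K[X]}
    (h : ∀ x : K, ∑ i, a i * C (x ^ Fintype.card k ^ i.val) =
      ∑ i, b i * C (x ^ Fintype.card k ^ i.val)) (i : ZMod (Module.finrank k K)) : a i = b i := by
  have hinj := (linearIndependent_frobeniusAlgHom_pow_zmod_val (k := k)
    (K := K)).fintypeLinearCombination_injective
  ext m
  refine congrFun (@hinj (fun i => (a i).coeff m) (fun i => (b i).coeff m)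
    (LinearMap.ext fun x => ?_)) i
  simpa [Fintype.linearCombination_apply, finsetSum_coeff, coeff_mul_C, -map_pow,
    FiniteField.coe_frobeniusAlgHom, pow_iterate] using congrArg (fun P : K[X] => P.coeff m) (h x)

theorem pow_card_pow_zmod_val_add (x : K) (i j : ZMod (Module.finrank k K)) :
    x ^ Fintype.card k ^ (i + j).val = (x ^ Fintype.card k ^ i.val) ^ Fintype.card k ^ j.val := by
  have := Fintype.ofFinite K
  rw [← pow_mul, ← pow_add, ZMod.val_add]
  conv_rhs => rw [← Nat.mod_add_div (i.val + j.val) (Module.finrank k K)]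
  rw [pow_add, pow_mul x, pow_mul _ (Module.finrank k K), ← Module.card_eq_pow_finrank]
  exact (FiniteField.pow_card_pow _ _).symm

theorem sum_mul_pow_pow_eq (c : ZMod (Module.finrank k K) → K) (x : K)
    (i : ZMod (Module.finrank k K)) :
    (∑ j, c j * x ^ Fintype.card k ^ j.val) ^ Fintype.card k ^ i.val =
      ∑ j, c (j - i) ^ Fintype.card k ^ i.val * x ^ Fintype.card k ^ j.val := by
  rw [← frobeniusAlgHom_pow_apply k, map_sum, ← (Equiv.subRight i).sum_comp]
  refine Finset.sum_congr rfl fun j _ => ?_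
  rw [frobeniusAlgHom_pow_apply, mul_pow, ← pow_card_pow_zmod_val_add, Equiv.subRight_apply,
    sub_add_cancel]

end Finite

variable [Fintype K]

theorem sum_redeiCoeff_mul (f : K →ₗ[k] K) (x : K) :
    ∑ i, redeiCoeff f i * (C (f x) - C x * X) ^ Fintype.card k ^ i.val =
      C x * (X ^ Fintype.card K - X) := by
  have h := congrArg (eval (C (f x) - C x * X)) (redei_sub_eq_sum f)
  have hpow : (C (f x) - C x * X) ^ Fintype.card K = C (f x) - C x * X ^ Fintype.card K := by
    rw [Module.card_eq_pow_finrank (K := k) (V := K), ← frobeniusAlgHom_pow_apply k,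
      map_sub, map_mul]
    simp only [frobeniusAlgHom_pow_apply, ← C_pow, ← Module.card_eq_pow_finrank,
      FiniteField.pow_card]
  simp only [eval_sub, eval_redei, eval_pow, eval_X, hpow, eval_finsetSum, eval_mul, eval_C] at h
  linear_combination -h

theorem redeiCoeff_mul_X_pow {f : K →ₗ[k] K} {c : ZMod (Module.finrank k K) → K}
    (hc : ∀ x, f x = ∑ i, c i * x ^ Fintype.card k ^ i.val) :
    ∀ j, redeiCoeff f j * X ^ Fintype.card k ^ j.val =
      ∑ i, C (c (j - i) ^ Fintype.card k ^ i.val) * redeiCoeff f i +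
        Pi.single (M := fun _ => K[X]) 0 (X - X ^ Fintype.card K) j := by
  refine eq_of_sum_mul_C_pow_eq fun x => ?_
  have hpow (i : ZMod (Module.finrank k K)) :
      (C (f x) - C x * X) ^ Fintype.card k ^ i.val =
        ∑ j, C (c (j - i) ^ Fintype.card k ^ i.val) * C (x ^ Fintype.card k ^ j.val) -
          C (x ^ Fintype.card k ^ i.val) * X ^ Fintype.card k ^ i.val := by
    rw [← frobeniusAlgHom_pow_apply k, map_sub, map_mul]
    simp only [frobeniusAlgHom_pow_apply, ← C_pow, ← C_mul, ← map_sum, hc, sum_mul_pow_pow_eq]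
  have hsingle : ∑ j : ZMod (Module.finrank k K), Pi.single (M := fun _ => K[X]) 0
      (X - X ^ Fintype.card K) j * C (x ^ Fintype.card k ^ j.val) =
        -(C x * (X ^ Fintype.card K - X)) := by
    rw [Fintype.sum_eq_single 0 fun j hj => by simp [hj]]
    rw [Pi.single_eq_same, ZMod.val_zero, pow_zero, pow_one]
    ring
  have hcomm : ∑ j, (∑ i, C (c (j - i) ^ Fintype.card k ^ i.val) * redeiCoeff f i) *
      C (x ^ Fintype.card k ^ j.val) = ∑ i, redeiCoeff f i *
        ∑ j, C (c (j - i) ^ Fintype.card k ^ i.val) * C (x ^ Fintype.card k ^ j.val) := by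
    simp only [Finset.sum_mul, Finset.mul_sum]
    rw [Finset.sum_comm]
    exact Finset.sum_congr rfl fun i _ => Finset.sum_congr rfl fun j _ => by ring
  have h := sum_redeiCoeff_mul f x
  simp only [hpow, mul_sub, Finset.sum_sub_distrib, ← hcomm] at h
  have hleft : ∑ j, redeiCoeff f j * X ^ Fintype.card k ^ j.val * C (x ^ Fintype.card k ^ j.val) =
      ∑ j, redeiCoeff f j * (C (x ^ Fintype.card k ^ j.val) * X ^ Fintype.card k ^ j.val) :=
    Finset.sum_congr rfl fun j _ => by ring
  simp only [add_mul, Finset.sum_add_distrib, hsingle, hleft]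
  linear_combination -h

end Recursion

section FieldOfLinearity

open Polynomial

theorem exists_dvd_forall_mem_iff_dvd_val {n : ℕ} [NeZero n] (H : AddSubgroup (ZMod n)) :
    ∃ g, g ∣ n ∧ ∀ i, i ∈ H ↔ g ∣ i.val := by
  obtain ⟨a, ha⟩ := Int.subgroup_cyclic (H.comap (Int.castAddHom (ZMod n)))
  have hmem (m : ℕ) : (m : ZMod n) ∈ H ↔ a.natAbs ∣ m := by
    have hm := SetLike.ext_iff.mp ha (m : ℤ)
    rw [← AddSubgroup.zmultiples_eq_closure, Int.mem_zmultiples_iff, ← Int.natAbs_dvd,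
      Int.natCast_dvd_natCast] at hm
    simpa using hm
  exact ⟨a.natAbs, (hmem n).mp (by simp), fun i => by simpa using hmem i.val⟩

theorem exists_subfield_natCard_eq_pow (k K : Type*) [Field k] [Field K] [Algebra k K]
    [Finite K] {g : ℕ} (hg : g ∣ Module.finrank k K) :
    ∃ E : Subfield K, Nat.card E = Nat.card k ^ g := by
  have : Finite k := Finite.of_injective _ (algebraMap k K).injective
  obtain ⟨p, hp⟩ := CharP.exists k
  have : Fact p.Prime := ⟨CharP.char_is_prime k p⟩
  have : NeZero g := ⟨fun h => (Module.finrank_pos (R := k) (M := K)).ne' (by simpa [h] using hg)⟩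
  obtain ⟨φ⟩ := FiniteField.nonempty_algHom_of_finrank_dvd (F := k)
    (K := FiniteField.Extension k p g) (L := K) (by rwa [FiniteField.finrank_extension])
  refine ⟨φ.toRingHom.fieldRange, ?_⟩
  rw [← Nat.card_congr φ.toRingHom.rangeRestrictFieldEquiv.toEquiv, FiniteField.natCard_extension]

theorem pow_natCard_pow_eq_self {K : Type*} [Field K] [Finite K] (E : Subfield K) {a : K}
    (ha : a ∈ E) (m : ℕ) : a ^ Nat.card E ^ m = a := by
  have := Fintype.ofFinite E
  rw [Nat.card_eq_fintype_card]
  exact congrArg Subtype.val (FiniteField.pow_card_pow m (⟨a, ha⟩ : E))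

variable {k K : Type*} [Field k] [Field K] [Algebra k K]

theorem natCard_le_natCard_ker_slopeMap [Finite K] {f : K →ₗ[k] K} {E : Subfield K}
    (hE : ∀ a ∈ E, ∀ x, f (a * x) = a * f x) {y : K} (hy : y ∈ directions f) :
    Nat.card E ≤ Nat.card (slopeMap f y).ker := by
  obtain ⟨z, hz, hz0⟩ := Submodule.exists_mem_ne_zero_of_ne_bot hy
  have hker (a : E) : (a : K) * z ∈ (slopeMap f y).ker := by
    rw [LinearMap.mem_ker, slopeMap_apply, sub_eq_zero] at hz ⊢
    rw [hE a a.2, hz, mul_assoc]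
  refine Nat.card_le_card_of_injective (fun a : E => (⟨a * z, hker a⟩ : (slopeMap f y).ker)) ?_
  exact fun a b hab => Subtype.ext (mul_right_cancel₀ hz0 (congrArg Subtype.val hab))

theorem injective_sum_card_pow_zmod_val [Fintype k] [Finite K] :
    Function.Injective fun P : Finset (ZMod (Module.finrank k K)) =>
      ∑ i ∈ P, Fintype.card k ^ i.val := by
  have h := (Finset.geomSum_injective (Fintype.one_lt_card (α := k))).comp
    (Finset.map_injective ⟨_, ZMod.val_injective (Module.finrank k K)⟩)
  simpa [Function.comp_def] using h

theorem redeiCoeff_ne_zero_of_mem_closure [Fintype k] [Fintype K] {f : K →ₗ[k] K}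
    {c : ZMod (Module.finrank k K) → K} (hc : ∀ x, f x = ∑ i, c i * x ^ Fintype.card k ^ i.val)
    {i : ZMod (Module.finrank k K)} (hi : i ∈ AddSubgroup.closure {i | c i ≠ 0}) :
    redeiCoeff f i ≠ 0 := by
  have hg : X - X ^ Fintype.card K ≠ (0 : K[X]) := by
    rw [← neg_sub]
    exact neg_ne_zero.mpr (FiniteField.X_pow_card_sub_X_ne_zero K Fintype.one_lt_card)
  have hrec := redeiCoeff_mul_X_pow hc
  rw [← AddSubgroup.mem_toAddSubmonoid, AddSubgroup.closure_toAddSubmonoid_of_finite] at hi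
  induction hi using AddSubmonoid.closure_induction_right with
  | zero => exact (natDegree_add_eq_of_mul_X_pow_eq
      (pos_of_injective_sum injective_sum_card_pow_zmod_val) hg hrec).1
  | add_right i _ j hj ih =>
    exact ne_zero_of_mul_X_pow_eq injective_sum_card_pow_zmod_val hg hrec ih
      (pow_ne_zero _ (by simpa using hj))

theorem exists_subfield_forall_map_mul [Finite K] {f : K →ₗ[k] K} {d : ℕ}
    (hdn : d ≤ Module.finrank k K)
    (hd : ∀ y ∈ directions f, d ≤ Module.finrank k (slopeMap f y).ker) :
    ∃ g, d ≤ g ∧ g ∣ Module.finrank k K ∧ ∃ E : Subfield K, Nat.card E = Nat.card k ^ g ∧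
      ∀ a ∈ E, ∀ x, f (a * x) = a * f x := by
  have := Fintype.ofFinite K
  have : Finite k := Finite.of_injective _ (algebraMap k K).injective
  have := Fintype.ofFinite k
  obtain ⟨c, hc⟩ := exists_eq_sum_mul_pow f
  obtain ⟨g, hgn, hg⟩ := exists_dvd_forall_mem_iff_dvd_val (AddSubgroup.closure {i | c i ≠ 0})
  obtain ⟨E, hE⟩ := exists_subfield_natCard_eq_pow k K hgn
  refine ⟨g, ?_, hgn, E, hE, fun a ha x => ?_⟩
  · by_contra! hgd
    have hval : (g : ZMod (Module.finrank k K)).val = g := ZMod.val_cast_of_lt (hgd.trans_le hdn)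
    have hg0 : (g : ZMod (Module.finrank k K)) ≠ 0 := fun h => by
      rw [h, ZMod.val_zero] at hval
      exact Module.finrank_pos.ne' (Nat.eq_zero_of_zero_dvd (hval ▸ hgn))
    exact redeiCoeff_ne_zero_of_mem_closure hc ((hg g).mpr hval.symm.dvd)
      (redeiCoeff_eq_zero f hd hg0 (hval.trans_lt hgd))
  · simp only [hc, Finset.mul_sum]
    refine Finset.sum_congr rfl fun i _ => ?_
    rcases eq_or_ne (c i) 0 with hi | hi
    · simp [hi]
    obtain ⟨m, hm⟩ := (hg i).mp (AddSubgroup.subset_closure hi)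
    rw [mul_pow, hm, pow_mul, ← Nat.card_eq_fintype_card, ← hE, pow_natCard_pow_eq_self E ha]
    ring

theorem dvd_finrank_and_exists_subfield_forall_map_mul [Finite K] {f : K →ₗ[k] K} {d : ℕ}
    (hd : ∀ y ∈ directions f, d ≤ Module.finrank k (slopeMap f y).ker) {y : K}
    (hy : y ∈ directions f) (hyd : Module.finrank k (slopeMap f y).ker = d) :
    d ∣ Module.finrank k K ∧ ∃ E : Subfield K, Nat.card E = Nat.card k ^ d ∧
      ∀ a ∈ E, ∀ x, f (a * x) = a * f x := by
  obtain ⟨g, hdg, hgn, E, hE, hlin⟩ :=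
    exists_subfield_forall_map_mul (hyd ▸ Submodule.finrank_le _) hd
  have : Finite k := Finite.of_injective _ (algebraMap k K).injective
  have hle := natCard_le_natCard_ker_slopeMap hlin hy
  rw [hE, Module.natCard_eq_pow_finrank (K := k) (V := (slopeMap f y).ker), hyd] at hle
  obtain rfl := hdg.antisymm ((Nat.pow_le_pow_iff_right Finite.one_lt_card).mp hle)
  exact ⟨hgn, E, hE, hlin⟩

theorem pow_sub_finrank_ker_le_ncard_directions [Finite K] {f : K →ₗ[k] K} {y : K}
    (hy : y ∈ directions f) :
    Nat.card k ^ (Module.finrank k K - Module.finrank k (slopeMap f y).ker) ≤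
      (directions f).ncard := by
  classical
  have := Fintype.ofFinite K
  have : Finite k := Finite.of_injective _ (algebraMap k K).injective
  have := Fintype.ofFinite k
  let P : K[X] := ∑ i, C ((redeiCoeff f i).eval y) * X ^ Fintype.card k ^ i.val
  have hP0 : P ≠ 0 := fun h0 => by
    have hcoeff := coeff_sum_C_mul_X_pow card_pow_zmod_val_injective
      (fun i => (redeiCoeff f i).eval y) 0
    rw [eval_redeiCoeff_of_lt_finrank_ker, if_pos rfl] at hcoeff
    · exact one_ne_zero (hcoeff.symm.trans (congrArg (fun Q : K[X] => Q.coeff _) h0))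
    · rw [ZMod.val_zero]
      exact Nat.pos_of_ne_zero fun h => hy (Submodule.finrank_eq_zero.mp h)
  have hdeg : P.natDegree ≤ (directions f).ncard := by
    refine natDegree_sum_le_of_forall_le _ _ fun i _ => ?_
    by_cases hi : redeiCoeff f i = 0
    · simp [hi]
    · exact (natDegree_C_mul_X_pow_le _ _).trans (card_pow_zmod_val_le_ncard_directions hi)
  have hmap : P = (∏ x, (X - C (slopeMap f y x))) - (X ^ Fintype.card K - X) := by
    have := congrArg (Polynomial.map (evalRingHom y)) (redei_sub_eq_sum f)
    simpa [P, Polynomial.map_sum, map_evalRingHom_redei] using this.symm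
  have hroots : ∀ z ∈ Finset.univ.image (slopeMap f y), P.eval z = 0 := fun z hz => by
    obtain ⟨x, -, rfl⟩ := Finset.mem_image.mp hz
    rw [hmap, eval_sub, eval_prod, Finset.prod_eq_zero (Finset.mem_univ x) (by simp)]
    simp [FiniteField.pow_card]
  have hcard : (Finset.univ.image (slopeMap f y)).card =
      Fintype.card k ^ (Module.finrank k K - Module.finrank k (slopeMap f y).ker) := by
    rw [← (slopeMap f y).finrank_range_add_finrank_ker, Nat.add_sub_cancel,
      ← Module.card_eq_pow_finrank, ← Set.toFinset_range, Set.toFinset_card]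
    rfl
  rw [Nat.card_eq_fintype_card, ← hcard]
  refine le_trans ?_ hdeg
  by_contra! hlt
  exact hP0 (eq_zero_of_natDegree_lt_card_of_eval_eq_zero' _ _ hroots hlt)

end FieldOfLinearity

theorem exists_linearEquiv_apply_eq {K V : Type*} [DivisionRing K] [AddCommGroup V] [Module K V]
    {v w : V} (hv : v ≠ 0) (hw : w ≠ 0) : ∃ Φ : V ≃ₗ[K] V, Φ v = w := by
  let e := (LinearEquiv.toSpanNonzeroSingleton K V v hv).symm.trans
    (LinearEquiv.toSpanNonzeroSingleton K V w hw)
  obtain ⟨Φ, hΦ⟩ := Submodule.exists_linearEquiv_restrict_eq e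
  refine ⟨Φ, ?_⟩
  have h := hΦ (LinearEquiv.toSpanNonzeroSingleton K V v hv 1)
  rw [LinearEquiv.trans_apply, LinearEquiv.symm_apply_apply] at h
  simpa only [LinearEquiv.toSpanNonzeroSingleton_apply, one_smul] using h.symm

section LinearSet

variable {k F : Type} [Field k] [Field F] [Algebra k F]

/-- The weight, with respect to the linear set defined by the `k`-subspace `U` of `F × F`, of the
point spanned by `v`. -/
noncomputable def pointWeight (U : Submodule k (F × F)) (v : F × F) : ℕ :=
  Module.finrank k ↥((Submodule.span F {v}).restrictScalars k ⊓ U)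

theorem pointWeight_map (Φ : (F × F) ≃ₗ[F] F × F) (U : Submodule k (F × F)) (v : F × F) :
    pointWeight (U.map (Φ.restrictScalars k).toLinearMap) (Φ v) = pointWeight U v := by
  have hspan : (Submodule.span F {Φ v}).restrictScalars k =
      ((Submodule.span F {v}).restrictScalars k).map (Φ.restrictScalars k).toLinearMap :=
    SetLike.coe_injective <| by
      simpa using (congrArg (↑) (Submodule.map_span Φ.toLinearMap {v}) :
        (_ : Set (F × F)) = _).symm
  rw [pointWeight, hspan, ← Submodule.map_inf _ (Φ.restrictScalars k).injective,
    LinearEquiv.finrank_map_eq, pointWeight]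

theorem linSet_image (Φ : (F × F) ≃ₗ[F] F × F) (S : Set (F × F)) :
    linSet F (Φ '' S) = Submodule.map Φ.toLinearMap '' linSet F S := by
  ext X
  simp only [linSet, Set.mem_ofPred_eq, Set.mem_image, exists_exists_and_eq_and]
  constructor
  · rintro ⟨u, hu, hu0, rfl⟩
    exact ⟨_, ⟨u, hu, by simpa using hu0, rfl⟩, by simp [Submodule.map_span]⟩
  · rintro ⟨-, ⟨u, hu, hu0, rfl⟩, rfl⟩
    exact ⟨u, hu, by simpa using hu0, by simp [Submodule.map_span]⟩

theorem ncard_linSet_image (Φ : (F × F) ≃ₗ[F] F × F) (S : Set (F × F)) :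
    (linSet F (Φ '' S)).ncard = (linSet F S).ncard := by
  rw [linSet_image]
  exact Set.ncard_image_of_injective _ (Submodule.map_injective_of_injective Φ.injective)

theorem ncard_linSet_mul_le [Finite F] (U : Submodule k (F × F)) :
    (linSet F (U : Set (F × F))).ncard * (Nat.card k - 1) ≤ Nat.card U - 1 := by
  choose u hu hu0 hspan using fun X : linSet F (U : Set (F × F)) => X.2
  let smulRep (z : linSet F (U : Set (F × F)) × kˣ) : ({0}ᶜ : Set U) :=
    ⟨z.2 • ⟨u z.1, hu z.1⟩, by simpa [Units.smul_def] using hu0 z.1⟩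
  have hinj : Function.Injective smulRep := by
    rintro ⟨X, a⟩ ⟨Y, b⟩ hab
    have hab : (a : k) • u X = (b : k) • u Y := congrArg (fun v => (v.1 : F × F)) hab
    have hX (c : kˣ) (X : linSet F (U : Set (F × F))) :
        X.1 = Submodule.span F {(c : k) • u X} := by
      rw [← algebraMap_smul F, Submodule.span_singleton_smul_eq (c.isUnit.map _), ← hspan]
    obtain rfl : X = Y := Subtype.ext (by rw [hX a, hab, ← hX])
    rw [Units.ext (smul_left_injective k (hu0 X) hab)]
  have hle := Nat.card_le_card_of_injective _ hinj
  rwa [Nat.card_prod, Nat.card_units, Nat.card_coe_set_eq, Nat.card_coe_set_eq, Set.ncard_compl,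
    Set.ncard_singleton] at hle

theorem exists_span_notMem_linSet [Finite F] {U : Submodule k (F × F)}
    (hU : Module.finrank k U ≤ Module.finrank k F) :
    ∃ w : F × F, w ≠ 0 ∧ Submodule.span F {w} ∉ linSet F (U : Set (F × F)) := by
  have : Finite k := Finite.of_injective _ (algebraMap k F).injective
  by_contra! hmem
  have hcard : Nat.card F + 1 ≤ (linSet F (U : Set (F × F))).ncard := by
    rw [← Projectivization.card_of_finrank_two F (F × F) (by simp), ← Nat.card_coe_set_eq]
    exact Nat.card_le_card_of_injective
      (fun P => ⟨P.submodule, P.submodule_eq ▸ hmem _ P.rep_nonzero⟩)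
      fun P Q hPQ => Projectivization.submodule_injective (congrArg Subtype.val hPQ)
  have hUF : Nat.card U ≤ Nat.card F := by
    rw [Module.natCard_eq_pow_finrank (K := k) (V := U),
      Module.natCard_eq_pow_finrank (K := k) (V := F)]
    exact Nat.pow_le_pow_right Nat.card_pos hU
  have hk : 1 ≤ Nat.card k - 1 := Nat.le_sub_one_of_lt Finite.one_lt_card
  have := (Nat.mul_le_mul hcard hk).trans (ncard_linSet_mul_le U)
  omega

theorem disjoint_of_span_notMem_linSet {U : Submodule k (F × F)} {w : F × F}
    (hw : Submodule.span F {w} ∉ linSet F (U : Set (F × F))) :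
    Disjoint ((Submodule.span F {w}).restrictScalars k) U := by
  refine Submodule.disjoint_def.mpr fun v hvw hvU => by_contra fun hv0 => hw ⟨v, hvU, hv0, ?_⟩
  obtain ⟨c, rfl⟩ := Submodule.mem_span_singleton.mp hvw
  exact (Submodule.span_singleton_smul_eq (left_ne_zero_of_smul hv0).isUnit w).symm

theorem finrank_le_of_span_notMem_linSet [Module.Finite k F] {U : Submodule k (F × F)} {w : F × F}
    (hw0 : w ≠ 0) (hw : Submodule.span F {w} ∉ linSet F (U : Set (F × F))) :
    Module.finrank k U ≤ Module.finrank k F := by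
  have hle := Submodule.finrank_add_finrank_le_of_disjoint (disjoint_of_span_notMem_linSet hw)
  have hline := ((LinearEquiv.toSpanNonzeroSingleton F _ w hw0).restrictScalars k).finrank_eq
  rw [Module.finrank_prod] at hle
  change _ = Module.finrank k ((Submodule.span F {w}).restrictScalars k) at hline
  omega

theorem exists_linearEquiv_map_eq_graph [Finite F] {U : Submodule k (F × F)}
    (hU : Module.finrank k U = Module.finrank k F) :
    ∃ (Φ : (F × F) ≃ₗ[F] F × F) (f : F →ₗ[k] F),
      U.map (Φ.restrictScalars k).toLinearMap = f.graph := by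
  obtain ⟨w, hw0, hw⟩ := exists_span_notMem_linSet hU.le
  obtain ⟨Φ, hΦ⟩ := exists_linearEquiv_apply_eq (K := F) hw0 (w := (0, 1)) (by simp)
  let fst := LinearMap.fst k F F ∘ₗ (U.map (Φ.restrictScalars k).toLinearMap).subtype
  have hinj : Function.Injective fst := by
    refine (injective_iff_map_eq_zero fst).mpr ?_
    rintro ⟨-, u, hu, rfl⟩ h1
    have h1 : (Φ u).1 = 0 := h1
    have hline : u = (Φ u).2 • w := Φ.injective (by simp [hΦ, Prod.ext_iff, h1])
    have hu0 : u = 0 := Submodule.disjoint_def.mp (disjoint_of_span_notMem_linSet hw) u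
      (Submodule.mem_span_singleton.mpr ⟨_, hline.symm⟩) hu
    simp [hu0]
  have hfin : Module.finrank k (U.map (Φ.restrictScalars k).toLinearMap) = Module.finrank k F :=
    (LinearEquiv.finrank_map_eq _ U).trans hU
  exact ⟨Φ, Submodule.exists_eq_graph
    ⟨hinj, (LinearMap.injective_iff_surjective_of_finrank_eq_finrank hfin).mp hinj⟩⟩

theorem pointWeight_graph (f : F →ₗ[k] F) {x : F} (hx : x ≠ 0) :
    pointWeight f.graph (x, f x) = Module.finrank k (slopeMap f (f x / x)).ker := by
  have hinj : Function.Injective (LinearMap.id.prod f) := fun a b h => congrArg Prod.fst h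
  have hmap : (slopeMap f (f x / x)).ker.map (LinearMap.id.prod f) =
      (Submodule.span F {(x, f x)}).restrictScalars k ⊓ f.graph := by
    ext ⟨a, b⟩
    simp only [Submodule.mem_map, LinearMap.mem_ker, slopeMap_apply, LinearMap.prod_apply,
      Function.prod_apply, LinearMap.id_coe, id_eq, Submodule.mem_inf,
      Submodule.restrictScalars_mem, Submodule.mem_span_singleton, LinearMap.mem_graph_iff,
      Prod.mk.injEq, Prod.smul_mk, smul_eq_mul, sub_eq_zero]
    constructor
    · rintro ⟨a, ha, rfl, rfl⟩
      exact ⟨⟨a / x, div_mul_cancel₀ a hx, by rw [ha]; ring⟩, rfl⟩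
    · rintro ⟨⟨c, rfl, rfl⟩, hc⟩
      exact ⟨_, by rw [← hc]; field_simp, rfl, hc.symm⟩
  rw [pointWeight, ← hmap, (Submodule.equivMapOfInjective _ hinj _).finrank_eq]

theorem ncard_directions_le_ncard_linSet_graph [Finite F] (f : F →ₗ[k] F) :
    (directions f).ncard ≤ (linSet F (f.graph : Set (F × F))).ncard := by
  refine Set.ncard_le_ncard_of_injOn (fun y => Submodule.span F {((1 : F), y)}) (fun y hy => ?_)
    fun y _ z _ hyz => ?_
  · obtain ⟨x, hx, rfl⟩ := mem_directions_iff.mp hy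
    refine ⟨(x, f x), rfl, by simp [hx], ?_⟩
    rw [← Submodule.span_singleton_smul_eq hx.isUnit]
    simp [mul_div_cancel₀ _ hx]
  · obtain ⟨c, hc⟩ := Submodule.span_singleton_eq_span_singleton.mp hyz
    have hc1 : (c : F) = 1 := by simpa [Units.smul_def] using congrArg Prod.fst hc
    simpa [Units.smul_def, hc1] using congrArg Prod.snd hc

theorem mem_directions_and_pointWeight_eq {f : F →ₗ[k] F} {v : F × F} (hv : v ∈ f.graph)
    (hv0 : v ≠ 0) : v.2 / v.1 ∈ directions f ∧
      pointWeight f.graph v = Module.finrank k (slopeMap f (v.2 / v.1)).ker := by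
  obtain ⟨x, y⟩ := v
  obtain rfl : y = f x := hv
  have hx : x ≠ 0 := fun hx => hv0 (by simp [hx])
  exact ⟨mem_directions_iff.mpr ⟨x, hx, rfl⟩, pointWeight_graph f hx⟩

theorem pow_sub_pointWeight_le_ncard_linSet [Finite F] {U : Submodule k (F × F)}
    (hU : Module.finrank k U = Module.finrank k F) {v : F × F} (hv : v ∈ U) (hv0 : v ≠ 0) :
    Nat.card k ^ (Module.finrank k F - pointWeight U v) ≤ (linSet F (U : Set (F × F))).ncard := by
  obtain ⟨Φ, f, hΦ⟩ := exists_linearEquiv_map_eq_graph hU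
  obtain ⟨hdir, hweight⟩ := mem_directions_and_pointWeight_eq (hΦ ▸ Submodule.mem_map_of_mem hv)
    (Φ.map_ne_zero_iff.mpr hv0)
  have himage : Φ '' (U : Set (F × F)) = f.graph := congrArg SetLike.coe hΦ
  rw [← ncard_linSet_image Φ, himage, ← pointWeight_map Φ, hΦ, hweight]
  exact (pow_sub_finrank_ker_le_ncard_directions hdir).trans
    (ncard_directions_le_ncard_linSet_graph f)

theorem pointWeight_dvd_finrank_and_exists_subfield_smul_mem [Finite F]
    {U : Submodule k (F × F)} (hU : Module.finrank k U = Module.finrank k F) {v : F × F}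
    (hv : v ∈ U) (hv0 : v ≠ 0) (hmin : ∀ u ∈ U, u ≠ 0 → pointWeight U v ≤ pointWeight U u) :
    pointWeight U v ∣ Module.finrank k F ∧ ∃ E : Subfield F,
      Nat.card E = Nat.card k ^ pointWeight U v ∧ ∀ a ∈ E, ∀ u ∈ U, a • u ∈ U := by
  obtain ⟨Φ, f, hΦ⟩ := exists_linearEquiv_map_eq_graph hU
  have hgraph (u : F × F) : u ∈ U ↔ Φ u ∈ f.graph := by
    rw [← hΦ]
    exact (Φ.injective.mem_set_image (s := U)).symm
  have hd (y) (hy : y ∈ directions f) :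
      pointWeight U v ≤ Module.finrank k (slopeMap f y).ker := by
    obtain ⟨x, hx, rfl⟩ := mem_directions_iff.mp hy
    have := hmin (Φ.symm (x, f x)) ((hgraph _).mpr (by simp)) (by simp [hx])
    rwa [← pointWeight_map Φ _ (Φ.symm _), hΦ, Φ.apply_symm_apply, pointWeight_graph f hx] at this
  obtain ⟨hdir, hweight⟩ := mem_directions_and_pointWeight_eq ((hgraph v).mp hv)
    (Φ.map_ne_zero_iff.mpr hv0)
  rw [← hΦ, pointWeight_map] at hweight
  obtain ⟨hdvd, E, hE, hlin⟩ :=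
    dvd_finrank_and_exists_subfield_forall_map_mul hd hdir hweight.symm
  refine ⟨hdvd, E, hE, fun a ha u hu => ?_⟩
  rw [hgraph, LinearMap.mem_graph_iff] at hu ⊢
  simp [hu, hlin a ha]

theorem natCard_le_pow_pointWeight_of_linSet_eq [Finite F] {U : Submodule k (F × F)}
    (hU : Module.finrank k U = Module.finrank k F) {v : F × F} (hv : v ∈ U) (hv0 : v ≠ 0)
    {E : Type} [Field E] [Algebra E F] {V : Submodule E (F × F)}
    (hVU : linSet F (V : Set (F × F)) = linSet F (U : Set (F × F))) :
    Nat.card E ≤ Nat.card k ^ pointWeight U v := by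
  have : Finite E := Finite.of_injective _ (algebraMap E F).injective
  obtain ⟨w, hw0, hw⟩ := exists_span_notMem_linSet hU.le
  have hVF : Nat.card V ≤ Nat.card F := by
    rw [Module.natCard_eq_pow_finrank (K := E) (V := V),
      Module.natCard_eq_pow_finrank (K := E) (V := F)]
    exact Nat.pow_le_pow_right Nat.card_pos (finrank_le_of_span_notMem_linSet hw0 (hVU ▸ hw))
  have hpoints := pow_sub_pointWeight_le_ncard_linSet hU hv hv0
  rw [← hVU] at hpoints
  have hweight : pointWeight U v ≤ Module.finrank k F :=
    hU ▸ Submodule.finrank_mono inf_le_right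
  by_contra! hlt
  have hle : Nat.card F ≤ Nat.card F - 1 := calc
    Nat.card F = Nat.card k ^ (Module.finrank k F - pointWeight U v) *
        Nat.card k ^ pointWeight U v := by
      rw [← pow_add, Nat.sub_add_cancel hweight, ← Module.natCard_eq_pow_finrank]
    _ ≤ (linSet F (V : Set (F × F))).ncard * (Nat.card E - 1) :=
      Nat.mul_le_mul hpoints (Nat.le_sub_one_of_lt hlt)
    _ ≤ Nat.card V - 1 := ncard_linSet_mul_le V
    _ ≤ Nat.card F - 1 := Nat.sub_le_sub_right hVF 1
  exact (Nat.sub_one_lt Nat.card_pos.ne').not_ge hle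

end LinearSet

/-- for a rank-`n` `F_q`-subspace `U` of `W = F_{q^n} × F_{q^n}`, if `d` is
the minimum weight of the points of `L_U`, then `d ∣ n` and the maximum field of
linearity of `L_U` is `F_{q^d}`: `L_U` is an `F_{q^d}`-linear set, and it is not an
`F_{q^{e'}}`-linear set for any `e' > d`. -/
theorem stmt_13 (p e n q : ℕ) (hp : p.Prime) (he : 0 < e) (hn : 0 < n) (hq : q = p ^ e)
    (F : Type) [Field F] [Fintype F] (hF : Fintype.card F = q ^ n)
    (Fq : Subfield F) (hFq : Nat.card Fq = q)
    (U : Submodule Fq (F × F)) (hU0 : U ≠ ⊥) (hU : Module.finrank Fq U = n)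
    (d : ℕ)
    (hd : d = sInf {w : ℕ | ∃ v : F × F, v ∈ U ∧ v ≠ 0 ∧
      w = Module.finrank Fq ↥((Submodule.span F {v}).restrictScalars Fq ⊓ U)}) :
    d ∣ n ∧
    (∃ E : Subfield F, Nat.card E = q ^ d ∧ ∃ U' : Submodule E (F × F),
      linSet F (U' : Set (F × F)) = linSet F (U : Set (F × F))) ∧
    (∀ e' : ℕ, d < e' → ∀ E : Subfield F, Nat.card E = q ^ e' →
      ∀ U'' : Submodule E (F × F),
        linSet F (U'' : Set (F × F)) ≠ linSet F (U : Set (F × F))) := by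
  have hq1 : 1 < q := hFq ▸ Finite.one_lt_card
  have hFn : Module.finrank Fq F = n := Nat.pow_right_injective hq1 <| by
    simp only [← hF, ← Nat.card_eq_fintype_card, Module.natCard_eq_pow_finrank (K := Fq) (V := F),
      hFq]
  have hUF : Module.finrank Fq U = Module.finrank Fq F := hU.trans hFn.symm
  obtain ⟨u, hu, hu0⟩ := Submodule.exists_mem_ne_zero_of_ne_bot hU0
  obtain ⟨v, hv, hv0, hdv⟩ : ∃ v ∈ U, v ≠ 0 ∧ d = pointWeight U v := by
    rw [hd]
    exact Nat.sInf_mem (s := {w | ∃ v ∈ U, v ≠ 0 ∧ w = pointWeight U v}) ⟨_, u, hu, hu0, rfl⟩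
  have hmin (u) (hu : u ∈ U) (hu0 : u ≠ 0) : pointWeight U v ≤ pointWeight U u := by
    rw [← hdv, hd]
    exact Nat.sInf_le ⟨u, hu, hu0, rfl⟩
  obtain ⟨hdvd, E, hE, hsmul⟩ :=
    pointWeight_dvd_finrank_and_exists_subfield_smul_mem hUF hv hv0 hmin
  rw [← hdv, hFn] at hdvd
  rw [← hdv, hFq] at hE
  refine ⟨hdvd, ⟨E, hE, { U.toAddSubmonoid with smul_mem' := fun a u hu => hsmul a a.2 u hu }, rfl⟩,
    fun e' he' E' hE' V hVU => ?_⟩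
  have hle := natCard_le_pow_pointWeight_of_linSet_eq hUF hv hv0 hVU
  rw [hE', hFq, ← hdv] at hle
  exact he'.not_ge ((Nat.pow_le_pow_iff_right hq1).mp hle)
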